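/- arXiv:math/0506519 — 6 statements merged into one kernel-verified Lean document; each statement's English description precedes it below -/
import Mathlib

section
/- Let K be a number field. If an element w of the ℝ-algebra ℝ ⊗_ℚ K has the property that for every α ∈ K the trace Tr_{(ℝ⊗_ℚK)/ℝ}(w · (1 ⊗ α)) lies in the image of ℚ in ℝ (i.e. is a rational number), then w lies in the image of K under the canonical map α ↦ 1 ⊗ α. (Paper's Lemma 1: if w ∈ K_∞ satisfies Tr(wK) ⊆ ℚ then w ∈ K.) -/
open TensorProduct

/-!
Trace pairing with `1 ⊗ s` is the base change of the functional `y ↦ Tr (s y)`. If the trace form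
is perfect, every coordinate functional of a basis is of this kind, so the coordinates of `w` in
the base-changed basis are values of `s ↦ Tr (w (1 ⊗ s))`; when these values come from the base
ring, so do the coordinates, and hence `w` comes from the original algebra.
-/

theorem exists_eq_one_tmul_of_baseChange_repr_eq_algebraMap {R A M ι : Type*}
    [CommSemiring R] [Semiring A] [Algebra R A] [AddCommMonoid M] [Module R M]
    (b : Module.Basis ι R M) (w : A ⊗[R] M)
    (hw : ∀ i, ∃ r : R, (b.baseChange A).repr w i = algebraMap R A r) :
    ∃ m : M, w = 1 ⊗ₜ[R] m := by
  choose r hr using hw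
  refine ⟨∑ i ∈ ((b.baseChange A).repr w).support, r i • b i, ?_⟩
  calc
    w = ∑ i ∈ ((b.baseChange A).repr w).support,
          (b.baseChange A).repr w i • b.baseChange A i :=
        ((b.baseChange A).linearCombination_repr w).symm
    _ = 1 ⊗ₜ[R] ∑ i ∈ ((b.baseChange A).repr w).support, r i • b i := by
        simp only [hr, Module.Basis.baseChange_apply, algebraMap_smul, tmul_sum, tmul_smul]

section TracePairing

variable {R S A : Type*} [CommRing R] [CommRing S] [CommRing A] [Algebra R S] [Algebra R A]
  [Module.Free R S] [Module.Finite R S]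

theorem trace_one_tmul (s : S) :
    Algebra.trace A (A ⊗[R] S) (1 ⊗ₜ[R] s) = algebraMap R A (Algebra.trace R S s) := by
  have lmul_baseChange :
      (Algebra.lmul R S s).baseChange A = Algebra.lmul A (A ⊗[R] S) (1 ⊗ₜ[R] s) := by
    ext y
    simp
  rw [Algebra.trace_apply, Algebra.trace_apply, ← LinearMap.trace_baseChange, lmul_baseChange]

theorem trace_mul_one_tmul_eq_baseChange_repr {ι : Type*} (b : Module.Basis ι R S) {i : ι} {s : S}
    (hs : Algebra.traceForm R S s = b.coord i) (w : A ⊗[R] S) :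
    Algebra.trace A (A ⊗[R] S) (w * (1 ⊗ₜ[R] s)) = (b.baseChange A).repr w i := by
  induction w with
  | zero => simp
  | add w₁ w₂ h₁ h₂ => simp [add_mul, h₁, h₂]
  | tmul a y =>
    have trace_mul : Algebra.trace R S (s * y) = b.repr y i := LinearMap.congr_fun hs y
    calc
      Algebra.trace A (A ⊗[R] S) (a ⊗ₜ[R] y * 1 ⊗ₜ[R] s)
          = a • Algebra.trace A (A ⊗[R] S) (1 ⊗ₜ[R] (s * y)) := by
            rw [← map_smul, smul_tmul', smul_eq_mul, mul_one,
              Algebra.TensorProduct.tmul_mul_tmul, mul_one, mul_comm y]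
      _ = (b.baseChange A).repr (a ⊗ₜ[R] y) i := by
            rw [trace_one_tmul, trace_mul, Module.Basis.baseChange_repr_tmul, smul_eq_mul, mul_comm,
              Algebra.smul_def]

theorem stmt_0_general [(Algebra.traceForm R S).IsPerfPair] (w : A ⊗[R] S)
    (hw : ∀ s : S, ∃ r : R, Algebra.trace A (A ⊗[R] S) (w * (1 ⊗ₜ[R] s)) = algebraMap R A r) :
    ∃ s : S, w = 1 ⊗ₜ[R] s := by
  let b := Module.Free.chooseBasis R S
  refine exists_eq_one_tmul_of_baseChange_repr_eq_algebraMap b w fun i ↦ ?_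
  obtain ⟨s, hs⟩ := (LinearMap.IsPerfPair.bijective_left (Algebra.traceForm R S)).2 (b.coord i)
  rw [← trace_mul_one_tmul_eq_baseChange_repr b hs]
  exact hw s

end TracePairing

instance isPerfPair_traceForm (F L : Type*) [Field F] [Field L] [Algebra F L]
    [FiniteDimensional F L] [Algebra.IsSeparable F L] : (Algebra.traceForm F L).IsPerfPair :=
  have nondegenerate := traceForm_nondegenerate F L
  .of_injective (LinearMap.ker_eq_bot.1 (LinearMap.separatingLeft_iff_ker_eq_bot.1 nondegenerate.1))
    (LinearMap.ker_eq_bot.1 (LinearMap.separatingRight_iff_flip_ker_eq_bot.1 nondegenerate.2))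

/-- Paper's Lemma 1: if `w ∈ K_∞ = ℝ ⊗_ℚ K` satisfies `Tr(w·K) ⊆ ℚ`, then `w ∈ K`. -/
theorem stmt_0 (K : Type*) [Field K] [NumberField K]
    (w : ℝ ⊗[ℚ] K)
    (hw : ∀ α : K, ∃ q : ℚ,
      Algebra.trace ℝ (ℝ ⊗[ℚ] K) (w * (1 ⊗ₜ[ℚ] α)) = (q : ℝ)) :
    ∃ α : K, w = 1 ⊗ₜ[ℚ] α :=
  stmt_0_general w hw
end

section
/- Let 𝒦 be an algebraic field extension of ℚ containing a primitive n-th root of unity for every positive integer n (e.g. any field containing the maximal abelian extension ℚ^ab). Suppose that to every finite-dimensional intermediate field K of 𝒦/ℚ there is assigned an element a_K of the ring of integers 𝓞_K (the integral closure of ℤ in K), such that whenever K ⊆ L are finite-dimensional intermediate fields the relative trace satisfies Tr_{L/K}(a_L) = a_K. Then a_K = 0 for every finite-dimensional intermediate field K. (Paper's Theorem 1: the trace inverse limit of the rings of integers is {0}.) -/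
/-- The inclusion of an intermediate field `K` of `𝒦/ℚ` into a larger intermediate field `L`,
as a ring homomorphism. -/
def inclusionRingHom {𝒦 : Type*} [Field 𝒦] [Algebra ℚ 𝒦]
    {K L : IntermediateField ℚ 𝒦} (hKL : K ≤ L) : K →+* L where
  toFun x := ⟨x.1, hKL x.2⟩
  map_one' := rfl
  map_mul' _ _ := rfl
  map_zero' := rfl
  map_add' _ _ := rfl

/-!
Let `p` be a prime. The trace to `ℚ` of an integer of `ℚ(ζ)`, with `ζ` a primitive
`p ^ (n + 1)`-th root of unity, is divisible by `p ^ n`: these integers are `ℤ`-combinations of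
powers of `ζ`, and a power of `ζ` has trace `0` unless it is a `p`-th root of unity, whose degree
over `ℚ` is prime to `p`. By transitivity of the trace the same divisibility holds in every finite
extension `L` of `ℚ(ζ)`.

If `a_K = Tr_{L/K}(a_L)` and `b` is an integer of `K`, then `Tr_{K/ℚ}(b a_K) = Tr_{L/ℚ}(b a_L)` is
therefore divisible by `p ^ n`. Letting `n` vary, `Tr_{K/ℚ}(b a_K) = 0` for every integer `b` of
`K`, and the trace form of `K/ℚ` is nondegenerate.
-/

open Algebra IntermediateField Module Polynomial AddSubgroup

section Cyclotomic

theorem nextCoeff_expand_eq_zero {R : Type*} [CommSemiring R] {p : ℕ} (hp : 1 < p) (f : R[X]) :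
    (expand R p f).nextCoeff = 0 := by
  rcases Nat.eq_zero_or_pos f.natDegree with hf | hf
  · rw [nextCoeff, if_pos (by rw [natDegree_expand, hf, zero_mul])]
  · have hdeg : 0 < f.natDegree * p := by positivity
    have hndvd : ¬ p ∣ f.natDegree * p - 1 := fun h ↦
      hp.ne' <| Nat.dvd_one.mp <| (Nat.dvd_sub_iff_right hdeg (dvd_mul_left _ _)).mp h
    rw [nextCoeff_of_natDegree_pos (by rwa [natDegree_expand]), natDegree_expand,
      coeff_expand (by positivity), if_neg hndvd]

theorem nextCoeff_cyclotomic_eq_zero_of_not_squarefree {n : ℕ} (hn : ¬ Squarefree n)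
    (R : Type*) [CommRing R] : (cyclotomic n R).nextCoeff = 0 := by
  obtain ⟨p, hp, c, rfl⟩ : ∃ p, p.Prime ∧ p * p ∣ n := by
    simpa [Nat.squarefree_iff_prime_squarefree] using hn
  rw [show p * p * c = p * c * p by ring, ← cyclotomic_expand_eq_cyclotomic hp (dvd_mul_right p c)]
  exact nextCoeff_expand_eq_zero hp.one_lt _

theorem trace_of_isPrimitiveRoot {F : Type*} [Field F] [Algebra ℚ F]
    [FiniteDimensional ℚ F] {d : ℕ} [NeZero d] {x : F} (hx : IsPrimitiveRoot x d) :
    trace ℚ F x = -(finrank ℚ⟮x⟯ F * (cyclotomic d ℤ).nextCoeff : ℤ) := by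
  rw [trace_eq_finrank_mul_minpoly_nextCoeff,
    ← hx.minpoly_eq_cyclotomic_of_irreducible (cyclotomic.irreducible_rat (NeZero.pos d)),
    ← map_cyclotomic_int, nextCoeff_map (Int.castRingHom ℚ).injective_int, eq_intCast]
  push_cast
  ring

theorem finrank_adjoin_of_isPrimitiveRoot {F : Type*} [Field F] [Algebra ℚ F]
    {d : ℕ} [NeZero d] {x : F} (hx : IsPrimitiveRoot x d) : finrank ℚ ℚ⟮x⟯ = d.totient := by
  rw [adjoin.finrank (hx.isIntegral (NeZero.pos d)).tower_top,
    ← hx.minpoly_eq_cyclotomic_of_irreducible (cyclotomic.irreducible_rat (NeZero.pos d)),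
    natDegree_cyclotomic]

variable {p : ℕ} [hp : Fact p.Prime] {n : ℕ}

theorem prime_pow_dvd_finrank_adjoin_of_isPrimitiveRoot {F : Type*} [Field F] [Algebra ℚ F]
    [IsCyclotomicExtension {p ^ (n + 1)} ℚ F] {d : ℕ} (hd : d ∣ p) {x : F}
    (hx : IsPrimitiveRoot x d) : p ^ n ∣ finrank ℚ⟮x⟯ F := by
  have : FiniteDimensional ℚ F := IsCyclotomicExtension.finiteDimensional {p ^ (n + 1)} ℚ F
  have hcop : (p ^ n).Coprime d.totient := by
    refine Nat.Coprime.pow_left n (hp.out.coprime_iff_not_dvd.mpr fun h ↦ ?_)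
    obtain rfl | rfl := (Nat.dvd_prime hp.out).mp hd
    · exact hp.out.not_dvd_one h
    · exact Nat.not_dvd_of_pos_of_lt (Nat.totient_pos.mpr hp.out.pos)
        (Nat.totient_lt _ hp.out.one_lt) h
  have : NeZero d := ⟨ne_zero_of_dvd_ne_zero hp.out.ne_zero hd⟩
  have htower : d.totient * finrank ℚ⟮x⟯ F = p ^ n * (p - 1) := by
    rw [← finrank_adjoin_of_isPrimitiveRoot hx, finrank_mul_finrank, IsCyclotomicExtension.finrank F
        (cyclotomic.irreducible_rat (pow_pos hp.out.pos (n + 1))),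
      Nat.totient_prime_pow_succ hp.out]
  exact hcop.dvd_of_dvd_mul_left (htower ▸ dvd_mul_right _ _)

theorem trace_mem_zmultiples_prime_pow_of_pow_eq_one {F : Type*} [Field F] [Algebra ℚ F]
    [IsCyclotomicExtension {p ^ (n + 1)} ℚ F] {x : F} (hx : x ^ p ^ (n + 1) = 1) :
    trace ℚ F x ∈ zmultiples ((p : ℚ) ^ n) := by
  have : FiniteDimensional ℚ F := IsCyclotomicExtension.finiteDimensional {p ^ (n + 1)} ℚ F
  have hdvd : orderOf x ∣ p ^ (n + 1) := orderOf_dvd_of_pow_eq_one hx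
  have : NeZero (orderOf x) := ⟨ne_zero_of_dvd_ne_zero (pow_ne_zero _ hp.out.ne_zero) hdvd⟩
  rw [trace_of_isPrimitiveRoot (.orderOf x)]
  by_cases hsq : Squarefree (orderOf x)
  · obtain ⟨m, hm⟩ := prime_pow_dvd_finrank_adjoin_of_isPrimitiveRoot (n := n)
      ((hsq.dvd_pow_iff_dvd n.succ_ne_zero).mp hdvd) (.orderOf x)
    refine neg_mem (mem_zmultiples_iff.mpr ⟨m * (cyclotomic (orderOf x) ℤ).nextCoeff, ?_⟩)
    rw [hm, zsmul_eq_mul]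
    push_cast
    ring
  · rw [nextCoeff_cyclotomic_eq_zero_of_not_squarefree hsq, mul_zero, Int.cast_zero, neg_zero]
    exact zero_mem _

theorem trace_mem_zmultiples_prime_pow_of_isCyclotomicExtension {F : Type*} [Field F] [Algebra ℚ F]
    [IsCyclotomicExtension {p ^ (n + 1)} ℚ F] {x : F} (hx : IsIntegral ℤ x) :
    trace ℚ F x ∈ zmultiples ((p : ℚ) ^ n) := by
  have : CharZero F := algebraRat.charZero F
  obtain rfl : ‹Algebra ℚ F› = DivisionRing.toRatAlgebra := Subsingleton.elim _ _
  have hζ := IsCyclotomicExtension.zeta_spec (p ^ (n + 1)) ℚ F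
  set ζ := IsCyclotomicExtension.zeta (p ^ (n + 1)) ℚ F
  have hxspan : x ∈ Submodule.span ℤ (Submonoid.powers ζ : Set F) := by
    have := IsCyclotomicExtension.Rat.isIntegralClosure_adjoin_singleton_of_prime_pow hζ
    obtain ⟨y, rfl⟩ := this.isIntegral_iff.mp hx
    rw [Submonoid.powers_eq_closure, ← adjoin_eq_span]
    exact y.2
  clear hx
  induction hxspan using Submodule.span_induction with
  | mem _ h =>
    obtain ⟨i, rfl⟩ := h
    refine trace_mem_zmultiples_prime_pow_of_pow_eq_one ?_
    rw [← pow_mul, mul_comm, pow_mul, hζ.pow_eq_one, one_pow]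
  | zero => rw [map_zero]; exact zero_mem _
  | add _ _ _ _ hy hz => rw [map_add]; exact add_mem hy hz
  | smul c _ _ hy => rw [map_zsmul]; exact zsmul_mem hy c

theorem trace_mem_zmultiples_prime_pow_of_isPrimitiveRoot {L : Type*} [Field L] [Algebra ℚ L]
    [FiniteDimensional ℚ L] {ζ : L} (hζ : IsPrimitiveRoot ζ (p ^ (n + 1))) {x : L}
    (hx : IsIntegral ℤ x) : trace ℚ L x ∈ zmultiples ((p : ℚ) ^ n) := by
  -- Keeps instance search from choosing `DivisionRing.toRatAlgebra`, here and in `stmt_1_general`.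
  let : Algebra ℚ ℚ⟮ζ⟯ := ℚ⟮ζ⟯.algebra'
  have := hζ.intermediateField_adjoin_isCyclotomicExtension ℚ
  rw [← trace_trace (S := ℚ⟮ζ⟯)]
  exact trace_mem_zmultiples_prime_pow_of_isCyclotomicExtension (isIntegral_trace hx)

theorem trace_mul_trace_mem_zmultiples_prime_pow {K L : Type*} [Field K] [Field L]
    [Algebra ℚ K] [Algebra ℚ L] [Algebra K L] [IsScalarTower ℚ K L] [FiniteDimensional ℚ L]
    {ζ : L} (hζ : IsPrimitiveRoot ζ (p ^ (n + 1))) {b : K} (hb : IsIntegral ℤ b)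
    {x : L} (hx : IsIntegral ℤ x) :
    trace ℚ K (b * trace K L x) ∈ zmultiples ((p : ℚ) ^ n) := by
  have : FiniteDimensional ℚ K := .left ℚ K L
  have : FiniteDimensional K L := .right ℚ K L
  have htrace : trace ℚ K (b * trace K L x) = trace ℚ L (algebraMap K L b * x) := by
    rw [← smul_eq_mul, ← map_smul, trace_trace, Algebra.smul_def]
  rw [htrace]
  exact trace_mem_zmultiples_prime_pow_of_isPrimitiveRoot hζ (hb.algebraMap.mul hx)

end Cyclotomic

theorem eq_zero_of_forall_mem_zmultiples_pow {R : Type*} [CommRing R] [LinearOrder R]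
    [IsStrictOrderedRing R] [Archimedean R] {q : R} (hq : 1 < q) {x : R}
    (hx : ∀ n : ℕ, x ∈ zmultiples (q ^ n)) : x = 0 := by
  obtain ⟨n, hn⟩ := pow_unbounded_of_one_lt |x| hq
  obtain ⟨k, rfl⟩ := mem_zmultiples_iff.mp (hx n)
  suffices k = 0 by rw [this, zero_smul]
  have hqn : 0 < q ^ n := pow_pos (zero_lt_one.trans hq) n
  rw [zsmul_eq_mul, abs_mul, abs_of_pos hqn, mul_lt_iff_lt_one_left hqn] at hn
  exact Int.abs_lt_one_iff.mp (mod_cast hn)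

theorem eq_zero_of_forall_isIntegral_trace_mul_eq_zero {K : Type*} [Field K] [Algebra ℚ K]
    [FiniteDimensional ℚ K] {c : K} (hc : ∀ b : K, IsIntegral ℤ b → trace ℚ K (b * c) = 0) :
    c = 0 := by
  refine (traceForm_nondegenerate ℚ K).2 c fun x ↦ ?_
  have hx : IsAlgebraic ℤ x := (IsFractionRing.isAlgebraic_iff ℤ ℚ K).mpr (.of_finite ℚ x)
  obtain ⟨m, hm, hmx⟩ := hx.exists_integral_multiple
  have hmtrace : m • trace ℚ K (x * c) = 0 := by rw [← map_zsmul, ← smul_mul_assoc, hc _ hmx]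
  exact (smul_eq_zero.mp hmtrace).resolve_left hm

theorem stmt_1_general {p : ℕ} (hp : p.Prime) (𝒦 : Type*) [Field 𝒦] [Algebra ℚ 𝒦]
    (hroots : ∀ n : ℕ, ∃ ζ : 𝒦, IsPrimitiveRoot ζ (p ^ n))
    (a : ∀ K : IntermediateField ℚ 𝒦, FiniteDimensional ℚ K → integralClosure ℤ K)
    (hcompat : ∀ (K L : IntermediateField ℚ 𝒦) (hK : FiniteDimensional ℚ K)
      (hL : FiniteDimensional ℚ L) (hKL : K ≤ L),
      letI : Algebra K L := (inclusionRingHom hKL).toAlgebra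
      Algebra.trace K L ((a L hL : L)) = ((a K hK : K))) :
    ∀ (K : IntermediateField ℚ 𝒦) (hK : FiniteDimensional ℚ K), a K hK = 0 := by
  intro K hK
  have : Fact p.Prime := ⟨hp⟩
  let (E : IntermediateField ℚ 𝒦) : Algebra ℚ E := E.algebra'
  refine Subtype.ext <| eq_zero_of_forall_isIntegral_trace_mul_eq_zero fun b hb ↦
    eq_zero_of_forall_mem_zmultiples_pow (q := (p : ℚ)) (mod_cast hp.one_lt) fun n ↦ ?_
  obtain ⟨ζ, hζ⟩ := hroots (n + 1)
  have : FiniteDimensional ℚ ℚ⟮ζ⟯ :=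
    adjoin.finiteDimensional (hζ.isIntegral (pow_pos hp.pos _)).tower_top
  have hL : FiniteDimensional ℚ ↥(K ⊔ ℚ⟮ζ⟯) := finiteDimensional_sup K ℚ⟮ζ⟯
  have hKL : K ≤ K ⊔ ℚ⟮ζ⟯ := le_sup_left
  let : Algebra K ↥(K ⊔ ℚ⟮ζ⟯) := (inclusionRingHom hKL).toAlgebra
  have := IsScalarTower.of_algebraMap_eq (R := ℚ) (S := K) (A := ↥(K ⊔ ℚ⟮ζ⟯)) fun _ ↦ rfl
  let ζL : ↥(K ⊔ ℚ⟮ζ⟯) := ⟨ζ, le_sup_right (a := K) (mem_adjoin_simple_self ℚ ζ)⟩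
  have hζL : IsPrimitiveRoot ζL (p ^ (n + 1)) := IsPrimitiveRoot.coe_submonoidClass_iff.mp hζ
  rw [← hcompat K _ hK hL hKL]
  exact trace_mul_trace_mem_zmultiples_prime_pow hζL hb (a _ hL).2

/-- Paper's Theorem 1: for a field `𝒦` containing `ℚ^ab` (expressed by containing a
primitive `n`-th root of unity for every `n > 0`), any family of algebraic integers
`a_K ∈ 𝓞_K`, indexed by the finite-dimensional intermediate fields `K` of `𝒦/ℚ` and
compatible under the relative trace maps, is identically zero. -/
theorem stmt_1 (𝒦 : Type*) [Field 𝒦] [Algebra ℚ 𝒦] [Algebra.IsAlgebraic ℚ 𝒦]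
    (hroots : ∀ n : ℕ, 0 < n → ∃ ζ : 𝒦, IsPrimitiveRoot ζ n)
    (a : ∀ K : IntermediateField ℚ 𝒦, FiniteDimensional ℚ K → integralClosure ℤ K)
    (hcompat : ∀ (K L : IntermediateField ℚ 𝒦) (hK : FiniteDimensional ℚ K)
      (hL : FiniteDimensional ℚ L) (hKL : K ≤ L),
      letI : Algebra K L := (inclusionRingHom hKL).toAlgebra
      Algebra.trace K L ((a L hL : L)) = ((a K hK : K))) :
    ∀ (K : IntermediateField ℚ 𝒦) (hK : FiniteDimensional ℚ K), a K hK = 0 := by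
  exact stmt_1_general Nat.prime_two 𝒦 (fun n ↦ hroots (2 ^ n) (by positivity)) a hcompat
end

section
/- Let k ≥ 1 and let K be the 2^k-th cyclotomic field over ℚ, of degree d = 2^{k−1}. Then the image of the ring of integers 𝓞_K under the trace map Tr_{K/ℚ} : K → ℚ is exactly the set {2^{k−1}·n : n ∈ ℤ} ⊆ ℚ, i.e. Tr(𝓞_K) is the ideal (d) of ℤ. -/
/-!
Let `K = ℚ(ζ)` with `ζ` a primitive `n`-th root of unity. Möbius inversion in
`∏ d ∣ n, Φ_d = X ^ n - 1` shows that the primitive `m`-th roots of unity sum to `μ m`, so that such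
a root in `K` has trace `μ m * φ n / φ m`. If `m` is squarefree, this is a multiple of
`φ n / φ (rad n) = n / rad n`, with equality up to sign for `m = rad n`; otherwise it vanishes.
Since `𝓞_K = ℤ[ζ]` is spanned by powers of `ζ`, the trace maps it onto the multiples of `n / rad n`.
-/

section

open Polynomial UniqueFactorizationMonoid
open scoped ArithmeticFunction.Moebius Nat IntermediateField

theorem nextCoeff_X_pow_sub_one (R : Type*) [Ring R] {n : ℕ} (hn : n ≠ 0) :
    (X ^ n - 1 : R[X]).nextCoeff = if n = 1 then -1 else 0 := by
  nontriviality R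
  have hdeg : (X ^ n - 1 : R[X]).natDegree = n := by
    simpa only [C_1] using natDegree_X_pow_sub_C (R := R) (n := n) (r := 1)
  rw [nextCoeff_of_natDegree_pos (by lia), hdeg, coeff_sub, coeff_X_pow, if_neg (by lia),
    coeff_one, zero_sub]
  by_cases h : n = 1
  · simp [h]
  · rw [if_neg (by lia), if_neg h, neg_zero]

theorem nextCoeff_cyclotomic (n : ℕ) (R : Type*) [CommRing R] :
    (cyclotomic n R).nextCoeff = -(μ n : R) := by
  rcases n.eq_zero_or_pos with rfl | hn
  · simp [nextCoeff]
  have sum_nextCoeff (m : ℕ) (hm : m > 0) :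
      ∑ d ∈ m.divisors, (cyclotomic d R).nextCoeff = if m = 1 then -1 else 0 := by
    rw [← Monic.nextCoeff_prod _ _ fun d _ ↦ cyclotomic.monic d R,
      prod_cyclotomic_eq_X_pow_sub_one hm, nextCoeff_X_pow_sub_one R hm.ne']
  rw [← ArithmeticFunction.sum_eq_iff_sum_mul_moebius_eq.1 sum_nextCoeff n hn,
    Nat.sum_divisorsAntidiagonal' fun a b ↦ (μ a : R) * if b = 1 then -1 else 0]
  simp [hn.ne']

section IrreducibleCyclotomic

variable {F L : Type*} [Field F] [Field L] [Algebra F L] [FiniteDimensional F L] {m : ℕ}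
  [NeZero (m : F)] {x : L}

theorem trace_primitiveRoot (hirr : Irreducible (cyclotomic m F)) (hx : IsPrimitiveRoot x m) :
    Algebra.trace F L x = Module.finrank F⟮x⟯ L * μ m := by
  rw [trace_eq_finrank_mul_minpoly_nextCoeff, ← hx.minpoly_eq_cyclotomic_of_irreducible hirr,
    nextCoeff_cyclotomic, neg_neg]

theorem finrank_adjoin_primitiveRoot_mul_totient (hirr : Irreducible (cyclotomic m F))
    (hx : IsPrimitiveRoot x m) : Module.finrank F⟮x⟯ L * φ m = Module.finrank F L := by
  rw [← natDegree_cyclotomic m F, hx.minpoly_eq_cyclotomic_of_irreducible hirr,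
    ← IntermediateField.adjoin.finrank (.of_finite F x), mul_comm, Module.finrank_mul_finrank]

end IrreducibleCyclotomic

theorem div_radical_mul_totient_radical (n : ℕ) : n / radical n * φ (radical n) = φ n := by
  have h : φ (radical n) = ∏ p ∈ n.primeFactors, (p - 1) := by
    have := Nat.totient_mul_prod_primeFactors (radical n)
    rw [Nat.primeFactors_radical, ← Nat.radical_eq_prod_primeFactors, mul_comm] at this
    exact Nat.eq_of_mul_eq_mul_left (Nat.radical_pos n) this
  rw [h, Nat.totient_eq_div_primeFactors_mul n, Nat.radical_eq_prod_primeFactors]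

section RationalCyclotomic

variable (n : ℕ) [NeZero n] {K : Type*} [Field K] [Algebra ℚ K] [IsCyclotomicExtension {n} ℚ K]

theorem finrank_adjoin_primitiveRoot_mul_totient_eq_totient {m : ℕ} [NeZero m] {x : K}
    (hx : IsPrimitiveRoot x m) : Module.finrank ℚ⟮x⟯ K * φ m = φ n := by
  have : FiniteDimensional ℚ K := IsCyclotomicExtension.finiteDimensional {n} ℚ K
  rw [finrank_adjoin_primitiveRoot_mul_totient (cyclotomic.irreducible_rat (NeZero.pos m)) hx,
    IsCyclotomicExtension.finrank K (cyclotomic.irreducible_rat (NeZero.pos n))]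

theorem trace_primitiveRoot_radical {x : K} (hx : IsPrimitiveRoot x (radical n)) :
    Algebra.trace ℚ K x = (n / radical n : ℕ) * μ (radical n) := by
  have : FiniteDimensional ℚ K := IsCyclotomicExtension.finiteDimensional {n} ℚ K
  have : NeZero (radical n) := ⟨radical_ne_zero⟩
  have hfinrank : Module.finrank ℚ⟮x⟯ K = n / radical n :=
    Nat.eq_of_mul_eq_mul_right (Nat.totient_pos.2 (Nat.radical_pos n)) <| by
      rw [finrank_adjoin_primitiveRoot_mul_totient_eq_totient n hx, div_radical_mul_totient_radical]
  rw [trace_primitiveRoot (cyclotomic.irreducible_rat (Nat.radical_pos n)) hx, hfinrank]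

theorem div_radical_dvd_finrank_adjoin_primitiveRoot {m : ℕ} (hsq : Squarefree m) (hmn : m ∣ n)
    {x : K} (hx : IsPrimitiveRoot x m) : n / radical n ∣ Module.finrank ℚ⟮x⟯ K := by
  have : NeZero m := ⟨hsq.ne_zero⟩
  have hφ : φ m ∣ φ (radical n) :=
    Nat.totient_dvd_of_dvd ((dvd_radical_iff hsq.isRadical (NeZero.ne n)).2 hmn)
  refine Nat.dvd_of_mul_dvd_mul_right (Nat.totient_pos.2 (NeZero.pos m)) ?_
  rw [finrank_adjoin_primitiveRoot_mul_totient_eq_totient n hx, ← div_radical_mul_totient_radical n]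
  exact mul_dvd_mul_left _ hφ

theorem trace_primitiveRoot_mem_span_div_radical {m : ℕ} (hmn : m ∣ n) {x : K}
    (hx : IsPrimitiveRoot x m) :
    Algebra.trace ℚ K x ∈ Submodule.span ℤ {((n / radical n : ℕ) : ℚ)} := by
  have : FiniteDimensional ℚ K := IsCyclotomicExtension.finiteDimensional {n} ℚ K
  have : NeZero m := ⟨ne_zero_of_dvd_ne_zero (NeZero.ne n) hmn⟩
  rw [trace_primitiveRoot (cyclotomic.irreducible_rat (NeZero.pos m)) hx,
    Submodule.mem_span_singleton]
  by_cases hsq : Squarefree m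
  · obtain ⟨c, hc⟩ := div_radical_dvd_finrank_adjoin_primitiveRoot n hsq hmn hx
    exact ⟨c * μ m, by rw [hc, zsmul_eq_mul]; push_cast; ring⟩
  · exact ⟨0, by simp [ArithmeticFunction.moebius_eq_zero_of_not_squarefree hsq]⟩

variable {n} in
theorem integralClosure_eq_adjoin_primitiveRoot {ζ : K} (hζ : IsPrimitiveRoot ζ n) :
    integralClosure ℤ K = Algebra.adjoin ℤ {ζ} := by
  have : CharZero K := algebraRat.charZero K
  obtain rfl : ‹Algebra ℚ K› = DivisionRing.toRatAlgebra := Subsingleton.elim _ _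
  have := IsCyclotomicExtension.Rat.isIntegralClosure_adjoin_singleton hζ
  ext x
  rw [mem_integralClosure_iff, IsIntegralClosure.isIntegral_iff (A := Algebra.adjoin ℤ {ζ})]
  exact ⟨fun ⟨y, hy⟩ ↦ hy ▸ y.2, fun hx ↦ ⟨⟨x, hx⟩, rfl⟩⟩

theorem trace_mem_span_div_radical_of_isIntegral {x : K} (hx : IsIntegral ℤ x) :
    Algebra.trace ℚ K x ∈ Submodule.span ℤ {((n / radical n : ℕ) : ℚ)} := by
  have hζ := IsCyclotomicExtension.zeta_spec n ℚ K
  have hx_span : x ∈ Submodule.span ℤ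
      (Submonoid.powers (IsCyclotomicExtension.zeta n ℚ K) : Set K) := by
    rwa [← mem_integralClosure_iff, integralClosure_eq_adjoin_primitiveRoot hζ,
      ← Subalgebra.mem_toSubmodule, Algebra.adjoin_eq_span,
      ← Submonoid.powers_eq_closure] at hx
  refine (Submodule.span_le (p := (Submodule.span ℤ _).comap
    ((Algebra.trace ℚ K).restrictScalars ℤ))).2 ?_ hx_span
  rintro _ ⟨i, rfl⟩
  exact trace_primitiveRoot_mem_span_div_radical n
    (orderOf_dvd_of_pow_eq_one (by rw [pow_right_comm, hζ.pow_eq_one, one_pow]))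
    (IsPrimitiveRoot.orderOf _)

variable (K) in
theorem stmt_3_general :
    Algebra.trace ℚ K '' (integralClosure ℤ K : Set K) =
      {q : ℚ | ∃ a : ℤ, q = (n / radical n : ℕ) * a} := by
  apply Set.Subset.antisymm
  · rintro _ ⟨x, hx, rfl⟩
    obtain ⟨a, ha⟩ := Submodule.mem_span_singleton.1 (trace_mem_span_div_radical_of_isIntegral n hx)
    exact ⟨a, by rw [← ha, zsmul_eq_mul, mul_comm]⟩
  · rintro _ ⟨a, rfl⟩
    have hξ := (IsCyclotomicExtension.zeta_spec n ℚ K).pow (NeZero.pos n)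
      (Nat.div_mul_cancel radical_dvd_self).symm
    refine ⟨(a * μ (radical n)) • _, zsmul_mem (hξ.isIntegral (Nat.radical_pos n)) _, ?_⟩
    have hμ : (μ (radical n) : ℚ) ^ 2 = 1 :=
      mod_cast ArithmeticFunction.moebius_sq_eq_one_of_squarefree squarefree_radical
    rw [map_zsmul, trace_primitiveRoot_radical n hξ, zsmul_eq_mul, Int.cast_mul]
    linear_combination (n / radical n : ℕ) * a * hμ

end RationalCyclotomic

theorem prime_pow_div_radical {p k : ℕ} (hp : p.Prime) (hk : k ≠ 0) :
    p ^ k / radical (p ^ k) = p ^ (k - 1) := by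
  rw [radical_pow_of_prime hp.prime hk, normalize_eq, Nat.pow_sub_one hp.ne_zero hk]

end

set_option synthInstance.maxHeartbeats 400000 in
/-- For the `2^k`-th cyclotomic field `K` (`k ≥ 1`), the image of the ring of integers
`𝓞_K` under the trace map `Tr_{K/ℚ} : K → ℚ` is exactly `{2^(k-1)·n : n ∈ ℤ}`,
i.e. the ideal of `ℤ` generated by the degree `d = 2^(k-1)`. -/
theorem stmt_3 (k : ℕ) (hk : 1 ≤ k) :
    ⇑(Algebra.trace ℚ (CyclotomicField (2 ^ k : ℕ+) ℚ)) ''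
        (integralClosure ℤ (CyclotomicField (2 ^ k : ℕ+) ℚ) : Set (CyclotomicField (2 ^ k : ℕ+) ℚ))
      = {q : ℚ | ∃ n : ℤ, q = 2 ^ (k - 1) * n} := by
  -- Instance search fails here: it picks `DivisionRing.toRatAlgebra` over `CyclotomicField.algebra`.
  have : IsCyclotomicExtension {((2 ^ k : ℕ+) : ℕ)} ℚ (CyclotomicField (2 ^ k : ℕ+) ℚ) :=
    CyclotomicField.isCyclotomicExtension _ ℚ
  exact (stmt_3_general (2 ^ k : ℕ+) (CyclotomicField (2 ^ k : ℕ+) ℚ)).trans <| by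
    simp [prime_pow_div_radical Nat.prime_two (Nat.one_le_iff_ne_zero.1 hk)]
end

section
/- Let K be a number field, V = ℝ ⊗_ℚ K with algebra trace Tr_V : V → ℝ over ℝ, and embed 𝓞_K into V by a ↦ 1 ⊗ a. For every continuous group homomorphism χ : (V, +) → U(1) satisfying χ(1 ⊗ a) = 1 for all a ∈ 𝓞_K, there exists a unique α ∈ K such that Tr_{K/ℚ}(α·a) ∈ ℤ for all a ∈ 𝓞_K (i.e. α lies in the inverse different 𝔡_K^{-1}) and χ(z) = exp(2πi · Tr_V(z · (1 ⊗ α))) for all z ∈ V. (Part of the paper's Theorem 5: Char(𝕋_K) ≅ 𝔡_K^{-1}, where 𝕋_K = K_∞/𝓞_K is the Minkowski torus.) -/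
open TensorProduct NumberField

/-!
Restricting a continuous character `χ` of a real vector space `E` to a line `ℝ v` gives a character
`t ↦ 𝐞 (t * f v)` of `ℝ`. Since `f v` is determined by this restriction, `f` is automatically
linear, so that `χ = 𝐞 ∘ f` for a unique linear functional `f`. On `E = ℝ ⊗ K`, triviality of `χ`
on a family spanning `K` over `ℚ` says that `f` takes integer values there, hence `f` is the base
change of a functional `K → ℚ`, and nondegeneracy of the trace form writes the latter uniquely as
`x ↦ Tr (α x)`.
-/

open scoped FourierTransform

section FourierChar

theorem fourierChar_eq_one_iff {x : ℝ} : 𝐞 x = 1 ↔ ∃ n : ℤ, x = n := by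
  rw [Real.fourierChar_apply', Circle.exp_eq_one]
  refine exists_congr fun n ↦ ?_
  rw [mul_comm, mul_left_inj' Real.two_pi_pos.ne']

theorem eq_of_forall_fourierChar_mul_eq {a b : ℝ} (h : ∀ t : ℝ, 𝐞 (t * a) = 𝐞 (t * b)) :
    a = b := by
  by_contra hab
  have hone (t : ℝ) : 𝐞 (t * (a - b)) = 1 := by
    rw [mul_sub, AddChar.map_sub_eq_div, h, div_self']
  obtain ⟨n, hn⟩ := fourierChar_eq_one_iff.1 (hone (2 * (a - b))⁻¹)
  have htwo : (2 : ℝ) * n = 1 := by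
    rw [← hn]
    field_simp [sub_ne_zero.2 hab]
  norm_cast at htwo
  omega

theorem exists_forall_eq_fourierChar_mul {φ : AddChar ℝ Circle} (hφ : Continuous φ) :
    ∃ a : ℝ, ∀ t, φ t = 𝐞 (t * a) := by
  -- The lift of `φ` through the covering `Circle.exp` is additive by uniqueness of lifts.
  obtain ⟨F, ⟨hF_zero, hF⟩, -⟩ := Circle.isCoveringMap_exp.existsUnique_continuousMap_lifts
    ⟨φ, hφ⟩ (a₀ := 0) (e₀ := 0) (by simp)
  have hexp (t : ℝ) : Circle.exp (F t) = φ t := congrFun hF t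
  have hF_add : (fun p : ℝ × ℝ ↦ F (p.1 + p.2)) = fun p ↦ F p.1 + F p.2 :=
    Circle.isCoveringMap_exp.eq_of_comp_eq (by fun_prop) (by fun_prop)
      (by ext p; simp [hexp, AddChar.map_add_eq_mul]) (0, 0) (by simp [hF_zero])
  let G : ℝ →+ ℝ := ⟨⟨F, hF_zero⟩, fun s t ↦ congrFun hF_add (s, t)⟩
  have hF_linear (t : ℝ) : F t = t * F 1 := by
    simpa only [smul_eq_mul, mul_one] using! map_real_smul G F.continuous t 1
  refine ⟨F 1 / (2 * Real.pi), fun t ↦ ?_⟩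
  rw [← hexp, hF_linear, Real.fourierChar_apply']
  congr 1
  field_simp

variable {E : Type*} [AddCommGroup E] [Module ℝ E]

theorem dual_eq_of_forall_fourierChar_eq {f g : Module.Dual ℝ E} (h : ∀ v, 𝐞 (f v) = 𝐞 (g v)) :
    f = g :=
  LinearMap.ext fun v ↦ eq_of_forall_fourierChar_mul_eq fun t ↦ by
    simpa only [map_smul, smul_eq_mul] using h (t • v)

theorem exists_dual_forall_eq_fourierChar [TopologicalSpace E] [ContinuousSMul ℝ E]
    {χ : AddChar E Circle} (hχ : Continuous χ) :
    ∃ f : Module.Dual ℝ E, ∀ v, χ v = 𝐞 (f v) := by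
  have hline (v : E) : ∃ a : ℝ, ∀ t : ℝ, χ (t • v) = 𝐞 (t * a) :=
    exists_forall_eq_fourierChar_mul
      (φ := χ.compAddMonoidHom (LinearMap.toSpanSingleton ℝ E v).toAddMonoidHom)
      (hχ.comp (continuous_id.smul continuous_const))
  choose f hf using hline
  have hadd (v w : E) : f (v + w) = f v + f w := eq_of_forall_fourierChar_mul_eq fun t ↦ by
    rw [← hf, smul_add, AddChar.map_add_eq_mul, hf, hf, mul_add, AddChar.map_add_eq_mul]
  have hsmul (c : ℝ) (v : E) : f (c • v) = c * f v := eq_of_forall_fourierChar_mul_eq fun t ↦ by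
    rw [← hf, smul_smul, hf, mul_assoc]
  exact ⟨⟨⟨f, hadd⟩, hsmul⟩, fun v ↦ by simpa using hf v 1⟩

end FourierChar

section BaseChange

variable {R A : Type*} [CommRing R] [CommRing A] [Algebra R A]

section Dual

variable [FaithfulSMul R A] {M : Type*} [AddCommGroup M] [Module R M]

theorem dual_baseChange_injective :
    Function.Injective (Module.Dual.baseChange A : Module.Dual R M → Module.Dual A (A ⊗[R] M)) := by
  refine fun g g' h ↦ LinearMap.ext fun x ↦ FaithfulSMul.algebraMap_injective R A ?_
  simpa only [Module.Dual.baseChange_apply_tmul, Algebra.algebraMap_eq_smul_one]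
    using LinearMap.congr_fun h (1 ⊗ₜ[R] x)

theorem exists_dual_baseChange_eq {ι : Type*} {v : ι → M}
    (hv : Submodule.span R (Set.range v) = ⊤) {f : Module.Dual A (A ⊗[R] M)}
    (hf : ∀ i, f (1 ⊗ₜ v i) ∈ Set.range (algebraMap R A)) :
    ∃ g : Module.Dual R M, g.baseChange A = f := by
  let h : M →ₗ[R] A := f.restrictScalars R ∘ₗ TensorProduct.mk R A M 1
  have hrange (x : M) : h x ∈ LinearMap.range (Algebra.linearMap R A) := by
    have hle : Submodule.span R (Set.range v) ≤
        (LinearMap.range (Algebra.linearMap R A)).comap h :=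
      Submodule.span_le.2 (Set.range_subset_iff.2 hf)
    exact hle (hv ▸ Submodule.mem_top)
  refine ⟨h.codRestrictOfInjective (Algebra.linearMap R A)
    (FaithfulSMul.algebraMap_injective R A) hrange, ?_⟩
  refine TensorProduct.AlgebraTensorModule.ext fun a x ↦ ?_
  rw [TensorProduct.tmul_eq_smul_one_tmul, map_smul, map_smul, Module.Dual.baseChange_apply_tmul,
    ← Algebra.algebraMap_eq_smul_one]
  exact congrArg (a • ·) (h.codRestrictOfInjective_comp_apply (Algebra.linearMap R A) _ hrange x)

end Dual

variable {S : Type*} [CommRing S] [Algebra R S] [Module.Free R S] [Module.Finite R S]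

theorem trace_tmul (a : A) (x : S) :
    Algebra.trace A (A ⊗[R] S) (a ⊗ₜ x) = Algebra.trace R S x • a := by
  rw [TensorProduct.tmul_eq_smul_one_tmul, map_smul, Algebra.trace_apply, Algebra.trace_apply,
    ← Algebra.baseChange_lmul, LinearMap.trace_baseChange, smul_eq_mul, mul_comm,
    Algebra.smul_def]

theorem trace_mul_one_tmul (z : A ⊗[R] S) (α : S) :
    Algebra.trace A (A ⊗[R] S) (z * 1 ⊗ₜ α) =
      Module.Dual.baseChange A (Algebra.traceForm R S α) z := by
  induction z with
  | zero => rw [zero_mul, map_zero, map_zero]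
  | add z w hz hw => rw [add_mul, map_add, map_add, hz, hw]
  | tmul a x =>
    rw [Algebra.TensorProduct.tmul_mul_tmul, mul_one, trace_tmul,
      Module.Dual.baseChange_apply_tmul, Algebra.traceForm_apply, mul_comm]

end BaseChange

theorem span_range_algebraMap_ringOfIntegers (K : Type*) [Field K] [NumberField K] :
    Submodule.span ℚ (Set.range (algebraMap (𝓞 K) K)) = ⊤ := by
  rw [eq_top_iff, ← (integralBasis K).span_eq]
  exact Submodule.span_mono <| Set.range_subset_iff.2 fun i ↦ ⟨_, (integralBasis_apply K i).symm⟩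

theorem stmt_6_general {K ι : Type*} [CommRing K] [Algebra ℚ K] [Module.Finite ℚ K]
    (hK : (Algebra.traceForm ℚ K).Nondegenerate)
    [TopologicalSpace (ℝ ⊗[ℚ] K)] [ContinuousSMul ℝ (ℝ ⊗[ℚ] K)] {v : ι → K}
    (hv : Submodule.span ℚ (Set.range v) = ⊤) {χ : AddChar (ℝ ⊗[ℚ] K) Circle}
    (hχ : Continuous χ) (htriv : ∀ i, χ (1 ⊗ₜ v i) = 1) :
    ∃! α : K, (∀ i, ∃ n : ℤ, Algebra.trace ℚ K (α * v i) = n) ∧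
      ∀ z, χ z = 𝐞 (Algebra.trace ℝ (ℝ ⊗[ℚ] K) (z * 1 ⊗ₜ α)) := by
  obtain ⟨f, hf⟩ := exists_dual_forall_eq_fourierChar hχ
  have hint (i : ι) : ∃ n : ℤ, f (1 ⊗ₜ v i) = n := by
    rw [← fourierChar_eq_one_iff, ← hf, htriv]
  obtain ⟨g, rfl⟩ := exists_dual_baseChange_eq hv fun i ↦
    (hint i).imp' Int.cast fun n hn ↦ by rw [hn, map_intCast]
  have hbij : Function.Bijective (Algebra.traceForm ℚ K) :=
    ((Algebra.traceForm ℚ K).toDual hK).bijective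
  obtain ⟨α, rfl⟩ := hbij.surjective g
  simp only [trace_mul_one_tmul]
  refine ⟨α, ⟨fun i ↦ (hint i).imp fun n hn ↦ ?_, hf⟩, fun β ⟨_, hβ⟩ ↦ ?_⟩
  · rw [Module.Dual.baseChange_apply_tmul, Algebra.traceForm_apply, Rat.smul_one_eq_cast] at hn
    exact_mod_cast hn
  · exact hbij.injective <| dual_baseChange_injective <|
      dual_eq_of_forall_fourierChar_eq fun z ↦ (hβ z).symm.trans (hf z)

/-- Part of the paper's Theorem 5: every continuous character of the Minkowski torus
`𝕋_K = K_∞/𝓞_K`, i.e. every continuous additive character `χ` of `V = ℝ ⊗_ℚ K`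
(with its canonical topology as a finite-dimensional real vector space) trivial on
(the image of) `𝓞_K`, is of the form `z ↦ exp(2πi·Tr_V(z·(1 ⊗ α)))` for a unique
`α` in the inverse different `𝔡_K⁻¹ = {α ∈ K : Tr_{K/ℚ}(α·𝓞_K) ⊆ ℤ}`. -/
theorem stmt_6 (K : Type*) [Field K] [NumberField K]
    (χ : ℝ ⊗[ℚ] K → Circle)
    (hcont : @Continuous _ _ (moduleTopology ℝ (ℝ ⊗[ℚ] K)) _ χ)
    (hhom : ∀ x y : ℝ ⊗[ℚ] K, χ (x + y) = χ x * χ y)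
    (htriv : ∀ a : 𝓞 K, χ (1 ⊗ₜ[ℚ] (a : K)) = 1) :
    ∃! α : K,
      (∀ a : 𝓞 K, ∃ n : ℤ, Algebra.trace ℚ K (α * (a : K)) = (n : ℚ)) ∧
      ∀ z : ℝ ⊗[ℚ] K,
        χ z = Circle.exp (2 * Real.pi * Algebra.trace ℝ (ℝ ⊗[ℚ] K) (z * (1 ⊗ₜ[ℚ] α))) := by
  let _ : TopologicalSpace (ℝ ⊗[ℚ] K) := moduleTopology ℝ (ℝ ⊗[ℚ] K)
  have : IsModuleTopology ℝ (ℝ ⊗[ℚ] K) := ⟨rfl⟩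
  let ψ : AddChar (ℝ ⊗[ℚ] K) Circle :=
    { toFun := χ
      map_zero_eq_one' := by simpa using htriv 0
      map_add_eq_mul' := hhom }
  exact stmt_6_general (traceForm_nondegenerate ℚ K) (span_range_algebraMap_ringOfIntegers K)
    (χ := ψ) hcont htriv
end

section
/- Let F : ℂ → ℂ be holomorphic on the upper half-plane ℍ = {z ∈ ℂ : Im z > 0} and not identically zero on ℍ. Suppose that for all positive integers m and n and all z ∈ ℍ, F((m/n)·z)^n = F(z)^m. Then there exists α ∈ ℂ such that F(z) = exp(2πi·α·z) for all z ∈ ℍ. (The case K = ℚ of the paper's Lemma 2: a holomorphic function on ℍ satisfying the functional equation F(ρ^r) = F(ρ)^r for all positive rationals r is an exponential.) -/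
open Complex

/-!
The equation at level `n` says that `z ↦ F (z / n)` is an `n`-th root of `F`. Comparing levels `k`
and `k + 1` shows that the zero set of `F` and the level sets of its logarithmic derivative
accumulate at each of their nonzero points `z`, along the points `k / (k + 1) * z`. By the identity
theorem `F` has no zeros and its logarithmic derivative is a constant `c`, so that
`F z = A * exp (c * z)`; the equation at level `2` then forces `A ^ 2 = A`.
-/

open Filter Set
open scoped Topology

lemma tendsto_natCast_div_succ_mul_nhdsNE {𝕜 : Type*} [RCLike 𝕜] {z : 𝕜} (hz : z ≠ 0) :
    Tendsto (fun k : ℕ ↦ (k / (k + 1) : 𝕜) * z) atTop (𝓝[≠] z) := by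
  refine tendsto_nhdsWithin_iff.2 ⟨?_, .of_forall fun k ↦ ?_⟩
  · simpa only [one_mul] using (tendsto_natCast_div_add_atTop (1 : 𝕜)).mul_const z
  · have hratio : (k / (k + 1) : 𝕜) ≠ 1 := by
      rw [Ne, div_eq_one_iff_eq k.cast_add_one_ne_zero]
      simp
    simpa [hz] using hratio

lemma frequently_nhdsNE_of_div_natCast_iff {𝕜 : Type*} [RCLike 𝕜] {U : Set 𝕜} (hU : IsOpen U)
    {p : 𝕜 → Prop} (hp : ∀ n : ℕ, 0 < n → ∀ w ∈ U, p (w / n) ↔ p w)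
    {z : 𝕜} (hzU : z ∈ U) (hz : z ≠ 0) (hpz : p z) :
    ∃ᶠ w in 𝓝[≠] z, p w := by
  have hlim := tendsto_natCast_div_succ_mul_nhdsNE hz
  have hmem : ∀ᶠ k : ℕ in atTop, (k / (k + 1) : 𝕜) * z ∈ U :=
    (tendsto_nhdsWithin_iff.1 hlim).1.eventually_mem (hU.mem_nhds hzU)
  refine hlim.frequently (Eventually.frequently ?_)
  filter_upwards [hmem, eventually_gt_atTop 0] with k hk hk_pos
  have hk_ne : (k : 𝕜) ≠ 0 := Nat.cast_ne_zero.2 hk_pos.ne'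
  have hdiv : (k / (k + 1) : 𝕜) * z / k = z / (k + 1 : ℕ) := by
    push_cast
    field_simp
  rwa [← hp k hk_pos _ hk, hdiv, hp (k + 1) k.succ_pos z hzU]

lemma logDeriv_div_natCast_eq {𝕜 : Type*} [NontriviallyNormedField 𝕜] {f : 𝕜 → 𝕜} {n : ℕ} {z : 𝕜}
    (hn : (n : 𝕜) ≠ 0) (hf : DifferentiableAt 𝕜 f (z / n))
    (hroot : ∀ᶠ w in 𝓝 z, f (w / n) ^ n = f w) :
    logDeriv f (z / n) = logDeriv f z := by
  have hdiv : HasDerivAt (fun w : 𝕜 ↦ w / n) (1 / n) z := (hasDerivAt_id z).div_const (n : 𝕜)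
  symm
  calc logDeriv f z
      = logDeriv (fun w ↦ (f ∘ (· / (n : 𝕜))) w ^ n) z :=
        (logDeriv_congr_nhds hroot).eq_of_nhds.symm
    _ = n * (logDeriv f (z / n) * (1 / n)) := by
        rw [logDeriv_fun_pow (hf.comp z hdiv.differentiableAt),
          logDeriv_comp (g := (· / (n : 𝕜))) hf hdiv.differentiableAt, hdiv.deriv]
    _ = logDeriv f (z / n) := by field_simp

lemma exists_eq_mul_exp_of_logDeriv_eq {U : Set ℂ} {f : ℂ → ℂ} {c : ℂ} (hU : IsOpen U)
    (hUc : IsPreconnected U) (hf : DifferentiableOn ℂ f U) (hf₀ : ∀ z ∈ U, f z ≠ 0)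
    (hc : ∀ z ∈ U, logDeriv f z = c) :
    ∃ A ≠ 0, ∀ z ∈ U, f z = A * exp (c * z) := by
  have hexp (z : ℂ) : HasDerivAt (fun w ↦ exp (c * w)) (exp (c * z) * c) z := by
    simpa using ((hasDerivAt_id z).const_mul c).cexp
  refine (logDeriv_eqOn_iff hf (fun z _ ↦ (hexp z).differentiableAt.differentiableWithinAt) hU hUc
    (fun z _ ↦ exp_ne_zero _) hf₀).1 fun z hz ↦ ?_
  rw [hc z hz, logDeriv_apply, (hexp z).deriv, mul_div_cancel_left₀ _ (exp_ne_zero _)]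

lemma eq_zero_of_tendsto_zero_of_pow_eq {R : Type*} [NormedRing R] {a : ℕ → R} {b : R}
    (ha : Tendsto a atTop (𝓝 0)) (hab : ∀ᶠ n in atTop, a n ^ n = b) : b = 0 := by
  have hpow : Tendsto (fun n ↦ a n ^ n) atTop (𝓝 0) := by
    refine squeeze_zero_norm' ?_
      (tendsto_pow_atTop_nhds_zero_of_lt_one (r := (1 / 2 : ℝ)) (by norm_num) (by norm_num))
    have hsmall : ∀ᶠ n in atTop, ‖a n‖ < 1 / 2 :=
      ha.norm.eventually_lt_const (by norm_num)
    filter_upwards [hsmall, eventually_gt_atTop 0] with n hn hn_pos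
    exact (norm_pow_le' _ hn_pos).trans (by gcongr)
  exact tendsto_nhds_unique (tendsto_const_nhds.congr' (hab.mono fun _ h ↦ h.symm)) hpow

section NaturalRoots

variable {U : Set ℂ} {F : ℂ → ℂ}

lemma eqOn_zero_of_natural_roots (hU : IsOpen U) (hUc : IsPreconnected U)
    (hF : DifferentiableOn ℂ F U) (hroot : ∀ n : ℕ, 0 < n → ∀ z ∈ U, F (z / n) ^ n = F z)
    {z₀ : ℂ} (hz₀ : z₀ ∈ U) (hFz₀ : F z₀ = 0) : EqOn F 0 U := by
  rcases eq_or_ne z₀ 0 with rfl | hne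
  · intro z hz
    have hlim : Tendsto (fun n : ℕ ↦ F (z / n)) atTop (𝓝 0) := by
      rw [← hFz₀]
      exact (hF.differentiableAt (hU.mem_nhds hz₀)).continuousAt.tendsto.comp
        (tendsto_const_div_atTop_nhds_zero_nat z)
    exact eq_zero_of_tendsto_zero_of_pow_eq hlim
      ((eventually_gt_atTop 0).mono fun n hn ↦ hroot n hn z hz)
  · refine (hF.analyticOnNhd hU).eqOn_zero_of_preconnected_of_frequently_eq_zero hUc hz₀
      (frequently_nhdsNE_of_div_natCast_iff hU (fun n hn w hw ↦ ?_) hz₀ hne hFz₀)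
    rw [← hroot n hn w hw, pow_eq_zero_iff hn.ne']

lemma exists_logDeriv_eq_of_natural_roots (hU : IsOpen U) (hUc : IsPreconnected U)
    (hdiv : ∀ n : ℕ, 0 < n → ∀ z ∈ U, z / n ∈ U) (hF : DifferentiableOn ℂ F U)
    (hF₀ : ∀ z ∈ U, F z ≠ 0) (hroot : ∀ n : ℕ, 0 < n → ∀ z ∈ U, F (z / n) ^ n = F z) :
    ∃ c, ∀ z ∈ U, logDeriv F z = c := by
  rcases U.eq_empty_or_nonempty with rfl | hne
  · simp
  obtain ⟨z₀, hz₀, hz₀_ne⟩ := (dense_compl_singleton (0 : ℂ)).inter_open_nonempty U hU hne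
  have hinv (n : ℕ) (hn : 0 < n) (w : ℂ) (hw : w ∈ U) : logDeriv F (w / n) = logDeriv F w :=
    logDeriv_div_natCast_eq (Nat.cast_ne_zero.2 hn.ne')
      (hF.differentiableAt (hU.mem_nhds (hdiv n hn w hw)))
      (eventually_of_mem (hU.mem_nhds hw) (hroot n hn))
  have hfreq : ∃ᶠ w in 𝓝[≠] z₀, logDeriv F w = logDeriv F z₀ :=
    frequently_nhdsNE_of_div_natCast_iff hU (fun n hn w hw ↦ by rw [hinv n hn w hw]) hz₀ hz₀_ne rfl
  have hanalytic : AnalyticOnNhd ℂ (logDeriv F) U :=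
    ((hF.deriv hU).div hF hF₀).analyticOnNhd hU
  exact ⟨logDeriv F z₀,
    hanalytic.eqOn_of_preconnected_of_frequently_eq analyticOnNhd_const hUc hz₀ hfreq⟩

theorem stmt_9_general (hU : IsOpen U) (hUc : IsPreconnected U)
    (hdiv : ∀ n : ℕ, 0 < n → ∀ z ∈ U, z / n ∈ U) (hF : DifferentiableOn ℂ F U)
    (hne : ∃ z ∈ U, F z ≠ 0) (hroot : ∀ n : ℕ, 0 < n → ∀ z ∈ U, F (z / n) ^ n = F z) :
    ∃ c, ∀ z ∈ U, F z = exp (c * z) := by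
  obtain ⟨z₀, hz₀, hFz₀⟩ := hne
  have hF₀ (z : ℂ) (hz : z ∈ U) : F z ≠ 0 := fun h ↦
    hFz₀ (eqOn_zero_of_natural_roots hU hUc hF hroot hz h hz₀)
  obtain ⟨c, hc⟩ := exists_logDeriv_eq_of_natural_roots hU hUc hdiv hF hF₀ hroot
  obtain ⟨A, hA, hFA⟩ := exists_eq_mul_exp_of_logDeriv_eq hU hUc hF hF₀ hc
  have hA_sq : A ^ 2 = A := by
    have hsq := hroot 2 two_pos z₀ hz₀
    rw [hFA _ (hdiv 2 two_pos z₀ hz₀), hFA z₀ hz₀, mul_pow, ← exp_nat_mul, mul_left_comm,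
      mul_div_cancel₀ z₀ (by norm_num)] at hsq
    exact mul_right_cancel₀ (exp_ne_zero _) hsq
  have hA_one : A = 1 := mul_left_cancel₀ hA (by rw [← sq, hA_sq, mul_one])
  exact ⟨c, fun z hz ↦ by rw [hFA z hz, hA_one, one_mul]⟩

end NaturalRoots

/-- The case `K = ℚ` of the paper's Lemma 2: a holomorphic function on the upper
half-plane `ℍ`, not identically zero there, satisfying `F(r·z)^n = F(z)^m` for all
positive rationals `r = m/n`, is of the form `F(z) = exp(2πi·α·z)`. -/
theorem stmt_9 (F : ℂ → ℂ)
    (hol : DifferentiableOn ℂ F {z : ℂ | 0 < z.im})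
    (hne : ¬ ∀ z ∈ {z : ℂ | 0 < z.im}, F z = 0)
    (hfe : ∀ m n : ℕ, 0 < m → 0 < n → ∀ z ∈ {z : ℂ | 0 < z.im},
      (F ((((m : ℝ) / (n : ℝ)) : ℂ) * z)) ^ n = (F z) ^ m) :
    ∃ α : ℂ, ∀ z ∈ {z : ℂ | 0 < z.im},
      F z = Complex.exp (2 * Real.pi * Complex.I * α * z) := by
  have hdiv (n : ℕ) (hn : 0 < n) (z : ℂ) (hz : 0 < z.im) : 0 < (z / n).im := by
    rw [div_natCast_im]
    positivity
  have hroot (n : ℕ) (hn : 0 < n) (z : ℂ) (hz : 0 < z.im) : F (z / n) ^ n = F z := by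
    simpa [div_eq_inv_mul] using hfe 1 n one_pos hn z hz
  obtain ⟨c, hc⟩ := stmt_9_general UpperHalfPlane.isOpen_upperHalfPlaneSet
    (convex_halfSpace_im_gt 0).isPreconnected hdiv hol (by simpa using hne) hroot
  exact ⟨c / (2 * Real.pi * I), fun z hz ↦ by
    rw [hc z hz, mul_div_cancel₀ c two_pi_I_ne_zero]⟩
end

section
/- Let 𝒦 be an algebraic field extension of ℚ containing a primitive n-th root of unity for every positive integer n (e.g. any field containing ℚ^ab). Then for every α ∈ 𝒦 there exists a finite-dimensional intermediate field L of 𝒦/ℚ with α ∈ L such that Tr_{L/ℚ}(α·b) ∈ ℤ for every b ∈ 𝓞_L. In other words, the inverse different 𝔡_𝒦^{-1} = colim_L 𝔡_L^{-1}, taken over finite subextensions L, is all of 𝒦. (Claim at the end of §7 of the paper: if 𝒦 ⊇ ℚ^ab then 𝔡_𝒦^{-1} = 𝒦.) -/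
/-!
Let `ζ` be a primitive root of unity of order `n * m`, where `m ∣ n`. Then
`Φ_{nm}(X) = Φ_n(X ^ m)`, so `m` divides `Φ_{nm}'(ζ)`, which generates the different of `ℚ(ζ)`
because `ℤ[ζ]` is the ring of integers. By multiplicativity of the different in towers, `m` divides
the different of every number field `L` containing `ζ`, i.e. `m⁻¹ 𝓞_L ⊆ 𝔡_L⁻¹`. Given `α`, choose
`m` such that `m α` is integral and apply this with `n = m` to `L = ℚ(α, ζ)`.
-/

open Polynomial IntermediateField NumberField nonZeroDivisors

theorem expand_cyclotomic_of_dvd {m n : ℕ} (h : m ∣ n) (R : Type*) [CommRing R] :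
    expand R m (cyclotomic n R) = cyclotomic (n * m) R := by
  induction m using induction_on_primes generalizing n with
  | zero => simp [zero_dvd_iff.mp h]
  | one => simp
  | prime_mul p m hp ih =>
    rw [expand_mul, ih (dvd_of_mul_left_dvd h),
      cyclotomic_expand_eq_cyclotomic hp ((dvd_of_mul_right_dvd h).mul_right m), mul_assoc,
      mul_comm m]

theorem natCast_dvd_derivative_cyclotomic_mul {m n : ℕ} (h : m ∣ n) (R : Type*) [CommRing R] :
    (m : R[X]) ∣ derivative (cyclotomic (n * m) R) := by
  rw [← expand_cyclotomic_of_dvd h, derivative_expand]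
  exact (dvd_mul_right _ _).mul_left _

section NumberField

variable {L : Type*} [Field L] [NumberField L] {m n : ℕ}

theorem differentIdeal_eq_span_aeval_derivative_cyclotomic [NeZero n]
    [IsCyclotomicExtension {n} ℚ L] {ζ : L} (hζ : IsPrimitiveRoot ζ n) :
    differentIdeal ℤ (𝓞 L) =
      Ideal.span {aeval hζ.toInteger (derivative (cyclotomic n ℤ))} := by
  have minpoly_eq : minpoly ℤ hζ.toInteger = cyclotomic n ℤ := by
    rw [cyclotomic_eq_minpoly hζ (NeZero.pos n)]
    exact (minpoly.algebraMap_eq RingOfIntegers.coe_injective hζ.toInteger).symm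
  have conductor_eq_top : conductor ℤ hζ.toInteger = ⊤ :=
    conductor_eq_top_of_adjoin_eq_top (IsCyclotomicExtension.Rat.adjoin_singleton_eq_top hζ)
  have adjoin_eq_top : Algebra.adjoin ℚ {algebraMap (𝓞 L) L hζ.toInteger} = ⊤ :=
    IsCyclotomicExtension.adjoin_primitive_root_eq_top hζ
  rw [← minpoly_eq, ← conductor_mul_differentIdeal ℤ ℚ L _ adjoin_eq_top, conductor_eq_top,
    Ideal.top_mul]

theorem span_natCast_dvd_differentIdeal_of_isCyclotomicExtension [NeZero (n * m)]
    [IsCyclotomicExtension {n * m} ℚ L] (h : m ∣ n) :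
    Ideal.span {(m : 𝓞 L)} ∣ differentIdeal ℤ (𝓞 L) := by
  rw [differentIdeal_eq_span_aeval_derivative_cyclotomic
    (IsCyclotomicExtension.zeta_spec (n * m) ℚ L), Ideal.dvd_span_singleton,
    Ideal.mem_span_singleton]
  simpa only [map_natCast] using
    _root_.map_dvd (aeval _) (natCast_dvd_derivative_cyclotomic_mul h ℤ)

theorem span_natCast_dvd_differentIdeal_of_isPrimitiveRoot [NeZero (n * m)] {ζ : L}
    (hζ : IsPrimitiveRoot ζ (n * m)) (h : m ∣ n) :
    Ideal.span {(m : 𝓞 L)} ∣ differentIdeal ℤ (𝓞 L) := by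
  have : IsCyclotomicExtension {n * m} ℚ ℚ⟮ζ⟯ :=
    hζ.intermediateField_adjoin_isCyclotomicExtension ℚ
  have dvd_map : Ideal.span {(m : 𝓞 L)} ∣
      (differentIdeal ℤ (𝓞 ℚ⟮ζ⟯)).map (algebraMap (𝓞 ℚ⟮ζ⟯) (𝓞 L)) := by
    simpa only [Ideal.mapHom_apply, Ideal.map_span, Set.image_singleton, map_natCast] using
      _root_.map_dvd (Ideal.mapHom (algebraMap (𝓞 ℚ⟮ζ⟯) (𝓞 L)))
        (span_natCast_dvd_differentIdeal_of_isCyclotomicExtension h)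
  rw [differentIdeal_eq_differentIdeal_mul_differentIdeal ℤ (𝓞 ℚ⟮ζ⟯) (𝓞 L)]
  exact dvd_map.mul_left _

end NumberField

theorem mem_traceDual_one_of_span_singleton_dvd_differentIdeal {A K L B : Type*} [CommRing A]
    [IsDomain A] [IsIntegrallyClosed A] [Field K] [Algebra A K] [IsFractionRing A K]
    [Field L] [Algebra K L] [FiniteDimensional K L] [Algebra.IsSeparable K L]
    [Algebra A L] [IsScalarTower A K L]
    [CommRing B] [IsDedekindDomain B] [Algebra A B] [Module.IsTorsionFree A B]
    [Algebra B L] [IsScalarTower A B L] [IsIntegralClosure B A L] [IsFractionRing B L]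
    {b : B} (hb : Ideal.span {b} ∣ differentIdeal A B)
    {x : L} (hx : IsIntegral A (algebraMap B L b * x)) :
    x ∈ Submodule.traceDual A K (1 : Submodule B L) := by
  obtain ⟨c, hc⟩ := (IsIntegralClosure.isIntegral_iff (A := B)).mp hx
  have different_ne_zero : (differentIdeal A B : FractionalIdeal B⁰ L) ≠ 0 := by
    rw [coeIdeal_differentIdeal A K]
    exact inv_ne_zero (FractionalIdeal.dual_ne_zero A K one_ne_zero)
  rw [← FractionalIdeal.coe_dual_one, FractionalIdeal.mem_coe,
    ← inv_inv (FractionalIdeal.dual A K 1), ← coeIdeal_differentIdeal,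
    FractionalIdeal.mem_inv_iff different_ne_zero]
  intro y hy
  obtain ⟨z, hz, rfl⟩ := (FractionalIdeal.mem_coeIdeal _).mp hy
  obtain ⟨e, rfl⟩ := Ideal.mem_span_singleton.mp (Ideal.le_of_dvd hb hz)
  refine (FractionalIdeal.mem_one_iff _).mpr ⟨c * e, ?_⟩
  rw [map_mul, map_mul, hc]
  ring

theorem mem_traceDual_one_of_isPrimitiveRoot {L : Type*} [Field L] [NumberField L] {m n : ℕ}
    [NeZero (n * m)] {ζ : L} (hζ : IsPrimitiveRoot ζ (n * m)) (h : m ∣ n)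
    {x : L} (hx : IsIntegral ℤ (m * x)) :
    x ∈ Submodule.traceDual ℤ ℚ (1 : Submodule (𝓞 L) L) :=
  mem_traceDual_one_of_span_singleton_dvd_differentIdeal
    (span_natCast_dvd_differentIdeal_of_isPrimitiveRoot hζ h) (by rwa [map_natCast])

theorem exists_natCast_mul_isIntegral {A : Type*} [CommRing A] [Algebra ℚ A] {x : A}
    (hx : IsAlgebraic ℚ x) : ∃ m : ℕ, m ≠ 0 ∧ IsIntegral ℤ (m * x) := by
  obtain ⟨d, hd, hdx⟩ := ((IsFractionRing.isAlgebraic_iff ℤ ℚ A).mpr hx).exists_integral_multiple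
  refine ⟨d.natAbs, Int.natAbs_ne_zero.mpr hd, ?_⟩
  obtain h | h := d.natAbs_eq <;> rw [h, zsmul_eq_mul] at hdx
  · simpa using hdx
  · simpa using hdx.neg

theorem stmt_11_general (𝒦 : Type*) [Field 𝒦] [Algebra ℚ 𝒦]
    (hroots : ∀ n : ℕ, 0 < n → ∃ ζ : 𝒦, IsPrimitiveRoot ζ n)
    (α : 𝒦) (halg : IsAlgebraic ℚ α) :
    ∃ L : IntermediateField ℚ 𝒦, FiniteDimensional ℚ L ∧
      ∃ hα : α ∈ L, ∀ b ∈ integralClosure ℤ L,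
        ∃ n : ℤ, Algebra.trace ℚ L ((⟨α, hα⟩ : L) * b) = (n : ℚ) := by
  obtain ⟨m, hm, hmα⟩ := exists_natCast_mul_isIntegral halg
  have : NeZero m := ⟨hm⟩
  obtain ⟨ζ, hζ⟩ := hroots (m * m) (NeZero.pos _)
  let L := ℚ⟮α, ζ⟯
  have hfin : FiniteDimensional ℚ L :=
    finiteDimensional_adjoin_pair halg.isIntegral (hζ.isIntegral (NeZero.pos _)).tower_top
  -- Instance search finds `DivisionRing.toRatAlgebra`, for which `hfin` is not stated.
  have : NumberField L := @NumberField.of_module_finite ℚ L _ _ _ L.algebra' hfin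
  have hαL : α ∈ L := subset_adjoin ℚ _ (Set.mem_insert α {ζ})
  have hζL : ζ ∈ L := subset_adjoin ℚ _ (Set.mem_insert_of_mem α rfl)
  have hζ' : IsPrimitiveRoot (⟨ζ, hζL⟩ : L) (m * m) := IsPrimitiveRoot.coe_submonoidClass_iff.mp hζ
  have hmα' : IsIntegral ℤ (m * (⟨α, hαL⟩ : L)) :=
    (isIntegral_algebraMap_iff (algebraMap L 𝒦).injective).mp (by simpa using! hmα)
  refine ⟨L, hfin, hαL, fun b hb => ?_⟩
  obtain ⟨n, hn⟩ := mem_traceDual_one_of_isPrimitiveRoot hζ' dvd_rfl hmα' b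
    (Submodule.mem_one.mpr ⟨⟨b, hb⟩, rfl⟩)
  exact ⟨n, by simpa using hn.symm⟩

/-- Claim at the end of §7 of the paper: if `𝒦` contains `ℚ^ab` (expressed by
containing a primitive `n`-th root of unity for every `n > 0`), then every `α ∈ 𝒦`
lies in the inverse different of some finite-dimensional intermediate field `L`
containing it, i.e. `𝔡_𝒦⁻¹ = colim_L 𝔡_L⁻¹ = 𝒦`. -/
theorem stmt_11 (𝒦 : Type*) [Field 𝒦] [Algebra ℚ 𝒦] [Algebra.IsAlgebraic ℚ 𝒦]
    (hroots : ∀ n : ℕ, 0 < n → ∃ ζ : 𝒦, IsPrimitiveRoot ζ n)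
    (α : 𝒦) :
    ∃ L : IntermediateField ℚ 𝒦, FiniteDimensional ℚ L ∧
      ∃ hα : α ∈ L, ∀ b ∈ integralClosure ℤ L,
        ∃ n : ℤ, Algebra.trace ℚ L ((⟨α, hα⟩ : L) * b) = (n : ℚ) :=
  stmt_11_general 𝒦 hroots α (Algebra.IsAlgebraic.isAlgebraic α)
end
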